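/- The measure μ2 on D with density ρ2(x,y) = 1/(ln 2 · (1+xy)²) is invariant under the natural extension Ĝ of the Gauss map: for every measurable A ⊆ D, μ2(Ĝ^{−1}(A)) = μ2(A). -/

import Mathlib

open MeasureTheory Filter Set Topology

noncomputable section

/-- The Gauss map `x ↦ {1/x}`. -/
def gaussMap (x : ℝ) : ℝ := Int.fract (1 / x)

/-- The `n`-th partial quotient (1-indexed) of the continued fraction expansion of `α`:
`pq α n = ⌊1 / 𝒢^{n-1} α⌋`. -/
def pq (α : ℝ) (n : ℕ) : ℕ := ⌊1 / gaussMap^[n - 1] α⌋₊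

/-- Denominators of the convergents attached to a (1-indexed) sequence of partial quotients:
`q 0 = 1`, `q 1 = b 1`, `q (n+2) = b (n+2) * q (n+1) + q n`. -/
def qden (b : ℕ → ℕ) : ℕ → ℕ
  | 0 => 1
  | 1 => b 1
  | n + 2 => b (n + 2) * qden b (n + 1) + qden b n

/-- Numerators of the convergents attached to a (1-indexed) sequence of partial quotients:
`p 0 = 0`, `p 1 = 1`, `p (n+2) = b (n+2) * p (n+1) + p n`. -/
def pnum (b : ℕ → ℕ) : ℕ → ℕ
  | 0 => 0
  | 1 => 1
  | n + 2 => b (n + 2) * pnum b (n + 1) + pnum b n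

/-- `n_R(α)`: the first index `n` with `q_n(α) > R`. -/
def nIndex (α : ℝ) (R : ℝ) : ℕ := sInf {n : ℕ | R < (qden (pq α) n : ℝ)}

/-- The Gauss measure on `(0,1)`, with density `1 / (ln 2 · (1 + x))`. -/
def gaussMeasure : Measure ℝ :=
  (volume.restrict (Ioo (0 : ℝ) 1)).withDensity fun x =>
    ENNReal.ofReal (1 / (Real.log 2 * (1 + x)))

/-- The domain `D = ((0,1) ∖ ℚ) × ((0,1) ∖ ℚ)` of the natural extension of the Gauss map. -/
def Dset : Set (ℝ × ℝ) :=
  {p | p.1 ∈ Ioo (0 : ℝ) 1 ∧ Irrational p.1 ∧ p.2 ∈ Ioo (0 : ℝ) 1 ∧ Irrational p.2}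

/-- The invariant measure `μ₂` on `D`, with density `1 / (ln 2 · (1 + x y)²)`. -/
def mu2 : Measure (ℝ × ℝ) :=
  (volume.restrict Dset).withDensity fun p =>
    ENNReal.ofReal (1 / (Real.log 2 * (1 + p.1 * p.2) ^ 2))

/-- The roof function `φ(x, y) = ln (⌊1/y⌋ + x)`. -/
def roof (p : ℝ × ℝ) : ℝ := Real.log ((⌊1 / p.2⌋ : ℝ) + p.1)

/-- The natural extension of the Gauss map,
`Ĝ(x, y) = (1 / (⌊1/y⌋ + x), 1/y − ⌊1/y⌋)`. -/
def GhatMap (p : ℝ × ℝ) : ℝ × ℝ := (1 / ((⌊1 / p.2⌋ : ℝ) + p.1), Int.fract (1 / p.2))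

/-- Birkhoff sums `S_r φ(p) = ∑_{i<r} φ(Ĝ^i p)` of the roof function under `Ĝ`. -/
def birk (p : ℝ × ℝ) (r : ℕ) : ℝ := ∑ i ∈ Finset.range r, roof (GhatMap^[i] p)

/-- `r(p, T)`: the first `r` with `S_r φ(p) > T`. -/
def rTime (p : ℝ × ℝ) (T : ℝ) : ℕ := sInf {r : ℕ | T < birk p r}

/-- Value of a finite continued fraction `[b₁, b₂, …, bₘ] = 1/(b₁ + 1/(b₂ + ⋯ + 1/bₘ))`,
entries given as a list. -/
def cfList : List ℝ → ℝ
  | [] => 0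
  | b :: t => 1 / (b + cfList t)

/-- The `m`-th truncation `[b 1, b 2, …, b m]` of an infinite continued fraction. -/
def cfTrunc (b : ℕ → ℝ) (m : ℕ) : ℝ := cfList ((List.range m).map fun i => b (i + 1))

/-- Value of the infinite continued fraction `[b 1, b 2, …]`, i.e. the limit of its finite
truncations. -/
def cfVal (b : ℕ → ℝ) : ℝ := limUnder atTop fun m => cfTrunc b m

/-- The finite continued fraction on the reversed word,
`cfRev b k = [b k; b (k-1), …, b 1] = b k + 1/(b (k-1) + ⋯ + 1/(b 1))`. -/
def cfRev (b : ℕ → ℝ) (k : ℕ) : ℝ :=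
  b k + cfList ((List.range (k - 1)).map fun i => b (k - 1 - i))

/-- For a bi-infinite sequence `a : ℤ → ℕ` of partial quotients,
`fn a n = ln q_n − ∑_{k=1}^n ln [a_k; a_{k-1}, a_{k-2}, …]`. -/
def fn (a : ℤ → ℕ) (n : ℕ) : ℝ :=
  Real.log (qden (fun k => a (k : ℤ)) n : ℝ) -
    ∑ k ∈ Finset.Icc 1 n,
      Real.log ((a (k : ℤ) : ℝ) + cfVal fun j => (a ((k : ℤ) - (j : ℤ)) : ℝ))

/-- The bi-sided cylinder of length `n` in `D` prescribing the sequence coordinates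
`a_k = b k` for `−n ≤ k ≤ n` (where `a_k`, `k ≥ 1`, are the partial quotients of the second
coordinate and `a_{−j}`, `j ≥ 0`, are the partial quotients of the first coordinate). -/
def cylinder (n : ℕ) (b : ℤ → ℕ) : Set (ℝ × ℝ) :=
  {p ∈ Dset | (∀ k : ℕ, 1 ≤ k → k ≤ n → pq p.2 k = b (k : ℤ)) ∧
    ∀ j : ℕ, j ≤ n → pq p.1 (j + 1) = b (-(j : ℤ))}

/-- The phase space of the special flow over `Ĝ` with roof function `φ`. -/
def DPhi : Set ((ℝ × ℝ) × ℝ) := {q | q.1 ∈ Dset ∧ 0 ≤ q.2 ∧ q.2 < roof q.1}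

/-- The invariant probability measure `μ₃` of the special flow. -/
def mu3 : Measure ((ℝ × ℝ) × ℝ) :=
  (ENNReal.ofReal (∫ p, roof p ∂mu2))⁻¹ • ((mu2.prod volume).restrict DPhi)

/-- The special flow `Φ_t` (for `t ≥ 0`) built over `Ĝ` with roof function `φ`:
`Φ_t(p, s) = (Ĝ^{r-1} p, s + t − S_{r-1} φ(p))` where `r = r(p, s + t)`. -/
def flowMap (t : ℝ) (q : (ℝ × ℝ) × ℝ) : (ℝ × ℝ) × ℝ :=
  (GhatMap^[rTime q.1 (q.2 + t) - 1] q.1,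
    q.2 + t - birk q.1 (rTime q.1 (q.2 + t) - 1))

end

theorem Dset_meas : MeasurableSet Dset := by
  have hI : MeasurableSet {x : ℝ | Irrational x} :=
    (Set.countable_range ((↑) : ℚ → ℝ)).measurableSet.compl
  have h : Dset = (Ioo (0:ℝ) 1 ∩ {x | Irrational x}) ×ˢ (Ioo (0:ℝ) 1 ∩ {x | Irrational x}) := by
    ext p
    simp only [Dset, mem_ofPred_eq, mem_prod, mem_inter_iff]
    tauto
  rw [h]
  exact (measurableSet_Ioo.inter hI).prod (measurableSet_Ioo.inter hI)

theorem Ghat_meas : Measurable GhatMap := by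
  unfold GhatMap
  have : Measurable fun p : ℝ × ℝ => ((⌊1 / p.2⌋ : ℤ) : ℝ) :=
    (measurable_from_top (f := fun n : ℤ => (n : ℝ))).comp
      (Int.measurable_floor.comp (by fun_prop))
  refine Measurable.prodMk ?_ ?_
  · exact (this.add measurable_fst).const_div 1
  · exact measurable_fract.comp (by fun_prop)

/-- one-coordinate facts -/
theorem floor_facts {y : ℝ} (hy : y ∈ Ioo (0:ℝ) 1) (hi : Irrational y) :
    (1:ℝ) ≤ (⌊1 / y⌋ : ℝ) ∧ Int.fract (1 / y) ∈ Ioo (0:ℝ) 1 ∧ Irrational (Int.fract (1 / y)) := by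
  have h1 : 1 < 1 / y := by rw [lt_div_iff₀ hy.1]; linarith [hy.2]
  have hf : Irrational (Int.fract (1 / y)) := by
    rw [Int.fract, one_div]
    exact (irrational_inv_iff.2 hi).sub_intCast _
  refine ⟨?_, ⟨?_, Int.fract_lt_one _⟩, hf⟩
  · exact_mod_cast Int.le_floor.2 (by exact_mod_cast h1.le)
  · exact lt_of_le_of_ne (Int.fract_nonneg _) (fun h => hf.ne_zero h.symm)

theorem inv_facts {x : ℝ} {n : ℤ} (hn : (1:ℝ) ≤ n) (hx : x ∈ Ioo (0:ℝ) 1) (hi : Irrational x) :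
    1 / ((n:ℝ) + x) ∈ Ioo (0:ℝ) 1 ∧ Irrational (1 / ((n:ℝ) + x)) ∧
      ⌊1 / (1 / ((n:ℝ) + x))⌋ = n ∧ Int.fract (1 / (1 / ((n:ℝ) + x))) = x := by
  have hp : 0 < (n:ℝ) + x := by linarith [hx.1]
  have hfl : ⌊(n:ℝ) + x⌋ = n := by
    rw [Int.floor_eq_iff]; constructor <;> linarith [hx.1, hx.2]
  refine ⟨⟨by positivity, ?_⟩, ?_, ?_, ?_⟩
  · rw [div_lt_one hp]; linarith [hx.1]
  · rw [one_div]; exact irrational_inv_iff.2 (hi.intCast_add n)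
  · rw [one_div_one_div, hfl]
  · rw [one_div_one_div, Int.fract, hfl]; ring

/-- the inverse -/
noncomputable def HhatMap (p : ℝ × ℝ) : ℝ × ℝ :=
  (Int.fract (1 / p.1), 1 / ((⌊1 / p.1⌋ : ℝ) + p.2))

theorem G_mapsTo {p : ℝ × ℝ} (hp : p ∈ Dset) : GhatMap p ∈ Dset := by
  obtain ⟨h1, h2, h3, h4⟩ := hp
  obtain ⟨a, b, c⟩ := floor_facts h3 h4
  obtain ⟨d, e, -, -⟩ := inv_facts a h1 h2
  exact ⟨d, e, b, c⟩

theorem H_mapsTo {p : ℝ × ℝ} (hp : p ∈ Dset) : HhatMap p ∈ Dset := by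
  obtain ⟨h1, h2, h3, h4⟩ := hp
  obtain ⟨a, b, c⟩ := floor_facts h1 h2
  obtain ⟨d, e, -, -⟩ := inv_facts a h3 h4
  exact ⟨b, c, d, e⟩

theorem HG {p : ℝ × ℝ} (hp : p ∈ Dset) : HhatMap (GhatMap p) = p := by
  obtain ⟨h1, h2, h3, h4⟩ := hp
  obtain ⟨a, b, c⟩ := floor_facts h3 h4
  obtain ⟨-, -, f, g⟩ := inv_facts a h1 h2
  refine Prod.ext ?_ ?_
  · exact g
  · simp only [HhatMap, GhatMap]
    rw [f, Int.floor_add_fract, one_div_one_div]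

theorem GH {p : ℝ × ℝ} (hp : p ∈ Dset) : GhatMap (HhatMap p) = p := by
  obtain ⟨h1, h2, h3, h4⟩ := hp
  obtain ⟨a, b, c⟩ := floor_facts h1 h2
  obtain ⟨-, -, f, g⟩ := inv_facts a h3 h4
  refine Prod.ext ?_ ?_
  · simp only [HhatMap, GhatMap]
    rw [f, Int.floor_add_fract, one_div_one_div]
  · exact g

/-- the derivative -/
noncomputable def GD (p : ℝ × ℝ) : ℝ × ℝ →L[ℝ] ℝ × ℝ :=
  ((-1 / ((⌊1 / p.2⌋ : ℝ) + p.1) ^ 2) • ContinuousLinearMap.id ℝ ℝ).prodMap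
    ((-1 / p.2 ^ 2) • ContinuousLinearMap.id ℝ ℝ)

theorem GD_det (p : ℝ × ℝ) :
    (GD p).det = (-1 / ((⌊1 / p.2⌋ : ℝ) + p.1) ^ 2) * (-1 / p.2 ^ 2) := by
  unfold GD ContinuousLinearMap.det
  rw [ContinuousLinearMap.coe_prodMap, LinearMap.det_prodMap]
  simp

theorem G_deriv {p : ℝ × ℝ} (hp : p ∈ Dset) : HasFDerivAt GhatMap (GD p) p := by
  obtain ⟨h1, h2, h3, h4⟩ := hp
  obtain ⟨a, b, c⟩ := floor_facts h3 h4
  have hy : p.2 ≠ 0 := h3.1.ne'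
  set n : ℤ := ⌊1 / p.2⌋ with hn
  have hx : (n:ℝ) + p.1 ≠ 0 := by linarith [h1.1]
  have d1 : HasDerivAt (fun x : ℝ => 1 / ((n:ℝ) + x)) (-1 / ((n:ℝ) + p.1) ^ 2) p.1 := by
    simpa using ((hasDerivAt_id p.1).const_add (n:ℝ)).fun_inv hx
  have d2 : HasDerivAt (fun y : ℝ => 1 / y - n) (-1 / p.2 ^ 2) p.2 := by
    simpa using ((hasDerivAt_id p.2).fun_inv hy).sub_const (n:ℝ)
  have key := HasFDerivAt.prodMap p d1.hasFDerivAt d2.hasFDerivAt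
  have hev : ∀ᶠ q : ℝ × ℝ in 𝓝 p, ⌊1 / q.2⌋ = n := by
    have hc : ContinuousAt (fun q : ℝ × ℝ => 1 / q.2) p :=
      continuousAt_const.div continuousAt_snd hy
    have hm : 1 / p.2 ∈ Ioo (n:ℝ) (n+1) := by
      refine ⟨?_, Int.lt_floor_add_one _⟩
      have := b.1
      rw [Int.fract] at this
      linarith
    filter_upwards [hc (Ioo_mem_nhds hm.1 hm.2)] with q hq
    rw [Int.floor_eq_iff]
    exact ⟨hq.1.le, hq.2⟩
  have hD : GD p = (ContinuousLinearMap.toSpanSingleton ℝ (-1 / ((n:ℝ) + p.1) ^ 2)).prodMap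
      (ContinuousLinearMap.toSpanSingleton ℝ (-1 / p.2 ^ 2)) := by
    unfold GD
    congr 1 <;> ext <;> simp [hn]
  rw [hD]
  refine key.congr_of_eventuallyEq ?_
  filter_upwards [hev] with q hq
  simp only [GhatMap, Int.fract, hq, Prod.map]

/-- The measure `μ₂` with density `1/(ln 2 · (1+xy)²)` on `D` is invariant
under the natural extension `Ĝ` of the Gauss map. -/
theorem statement12 (A : Set (ℝ × ℝ)) (hA : MeasurableSet A) :
    mu2 (GhatMap ⁻¹' A) = mu2 A := by
  have hB := Ghat_meas hA
  have hs : MeasurableSet (GhatMap ⁻¹' A ∩ Dset) := hB.inter Dset_meas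
  have him : GhatMap '' (GhatMap ⁻¹' A ∩ Dset) = A ∩ Dset := by
    ext q
    constructor
    · rintro ⟨p, ⟨h1, h2⟩, rfl⟩
      exact ⟨h1, G_mapsTo h2⟩
    · rintro ⟨h1, h2⟩
      exact ⟨HhatMap q, ⟨by rw [mem_preimage, GH h2]; exact h1, H_mapsTo h2⟩, GH h2⟩
  have hinj : InjOn GhatMap (GhatMap ⁻¹' A ∩ Dset) := by
    intro p hp q hq h
    rw [← HG hp.2, h, HG hq.2]
  unfold mu2
  rw [withDensity_apply _ hB, withDensity_apply _ hA, Measure.restrict_restrict hB,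
    Measure.restrict_restrict hA, ← him,
    lintegral_image_eq_lintegral_abs_det_fderiv_mul volume hs
      (fun p hp => (G_deriv hp.2).hasFDerivWithinAt) hinj]
  refine setLIntegral_congr_fun hs ?_
  rintro p ⟨-, h1, h2, h3, h4⟩
  obtain ⟨a, b, c⟩ := floor_facts h3 h4
  have hlog : 0 < Real.log 2 := Real.log_pos (by norm_num)
  have hx0 := h1.1
  have hy0 := h3.1
  have hx : 0 < (⌊1 / p.2⌋ : ℝ) + p.1 := by linarith
  simp only [GD_det, GhatMap]
  rw [← ENNReal.ofReal_mul (abs_nonneg _)]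
  congr 1
  rw [show (-1 / ((⌊1 / p.2⌋ : ℝ) + p.1) ^ 2) * (-1 / p.2 ^ 2)
    = 1 / ((((⌊1 / p.2⌋ : ℝ) + p.1) ^ 2) * p.2 ^ 2) by field_simp, abs_of_pos (by positivity)]
  have e : 1 + 1 / ((⌊1 / p.2⌋ : ℝ) + p.1) * Int.fract (1 / p.2)
      = (1 + p.1 * p.2) / (((⌊1 / p.2⌋ : ℝ) + p.1) * p.2) := by
    rw [Int.fract]
    generalize (⌊1 / p.2⌋ : ℝ) = m at *
    field_simp
    ring
  rw [e]
  have : 0 < 1 + p.1 * p.2 := by positivity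
  generalize (⌊1 / p.2⌋ : ℝ) + p.1 = m at *
  field_simp
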